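/- arXiv:1110.1963 — 3 statements merged into one kernel-verified Lean document; each statement's English description precedes it below -/
import Mathlib

section
/- Let b_1,…,b_s be the square-free monomials of degree d+1 lying in I \ J. Suppose r > s and for each i ∈ {1,…,r} there exists at most one j ∈ {1,…,s} with f_i | b_j. Then depth_S (I/J) = d. -/
open MvPolynomial

/-- The square-free monomial `∏ i ∈ T, X i` associated to a set `T` of variables. -/
noncomputable def sqMon (K : Type) [Field K] {n : ℕ} (T : Finset (Fin n)) :
    MvPolynomial (Fin n) K :=
  ∏ i ∈ T, X i

/-- `GenBySqMonOfDeg K P I` means: `I` is generated by square-free monomials whose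
degrees satisfy the predicate `P`. -/
def GenBySqMonOfDeg (K : Type) [Field K] {n : ℕ} (P : ℕ → Prop)
    (I : Ideal (MvPolynomial (Fin n) K)) : Prop :=
  ∃ G : Set (Finset (Fin n)), (∀ T ∈ G, P T.card) ∧ I = Ideal.span (sqMon K '' G)

/-- `rho K d I` : the number of square-free monomials of degree `d` belonging to `I`. -/
noncomputable def rho (K : Type) [Field K] {n : ℕ} (d : ℕ)
    (I : Ideal (MvPolynomial (Fin n) K)) : ℕ :=
  Set.ncard {T : Finset (Fin n) | T.card = d ∧ sqMon K T ∈ I}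

/-- The maximal graded ideal `(x_1, …, x_n)` of `K[x_1, …, x_n]`. -/
noncomputable def maxGraded (K : Type) [Field K] (n : ℕ) :
    Ideal (MvPolynomial (Fin n) K) :=
  Ideal.span (Set.range (X : Fin n → MvPolynomial (Fin n) K))

/-- The depth of the module `M` with respect to the ideal `I` : the supremum of the
lengths of `M`-regular sequences consisting of elements of `I`. -/
noncomputable def moduleDepth {R : Type} [CommRing R] (I : Ideal R)
    (M : Type) [AddCommGroup M] [Module R M] : ℕ∞ :=
  sSup {k : ℕ∞ | ∃ rs : List R, k = (rs.length : ℕ∞) ∧ (∀ r ∈ rs, r ∈ I) ∧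
    RingTheory.Sequence.IsRegular M rs}

/-- The `R`-module `I/J` (more precisely `I/(I ∩ J)`, which is `I/J` when `J ≤ I`). -/
noncomputable abbrev idealQuot {R : Type} [CommRing R] (I J : Ideal R) : Type :=
  ↥I ⧸ (Submodule.comap I.subtype (J : Submodule R R))


section kos
open scoped Pointwise
variable {n : ℕ} {R : Type} [CommRing R] (x : Fin n → R)
  {M : Type} [AddCommGroup M] [Module R M] {N : Type} [AddCommGroup N] [Module R N]

def ksg (R : Type) [CommRing R] {n : ℕ} (a : Fin n) (F : Finset (Fin n)) : R :=
  (-1) ^ (F.filter (· < a)).card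

lemma ksg_sq (a : Fin n) (F : Finset (Fin n)) : ksg R a F * ksg R a F = 1 := by
  unfold ksg
  rw [← mul_pow]; simp

lemma ksg_insert (a b : Fin n) (F : Finset (Fin n)) (ha : a ∉ F) :
    ksg R b (insert a F) = ksg R b F * (if a < b then -1 else 1) := by
  unfold ksg
  rw [Finset.filter_insert]
  split_ifs with h
  · rw [Finset.card_insert_of_notMem (by simp [ha]), pow_succ]
  · simp

lemma ksg_anti (a b : Fin n) (F : Finset (Fin n)) (ha : a ∉ F) (hb : b ∉ F) (hab : a ≠ b) :
    ksg R a F * ksg R b (insert a F) = - (ksg R b F * ksg R a (insert b F)) := by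
  rw [ksg_insert a b F ha, ksg_insert b a F hb]
  rcases lt_or_gt_of_ne hab with h | h
  · simp [h, h.not_gt]; ring
  · simp [h, h.not_gt]; ring

def kbd (M : Type) [AddCommGroup M] [Module R M] :
    (Finset (Fin n) → M) →ₗ[R] (Finset (Fin n) → M) where
  toFun c F := ∑ a, if a ∈ F then 0 else (ksg R a F * x a) • c (insert a F)
  map_add' c c' := by
    funext F
    simp only [Pi.add_apply, ← Finset.sum_add_distrib]
    refine Finset.sum_congr rfl fun a _ => ?_
    split_ifs <;> simp
  map_smul' t c := by
    funext F
    simp only [Pi.smul_apply, Finset.smul_sum, RingHom.id_apply]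
    refine Finset.sum_congr rfl fun a _ => ?_
    split_ifs
    · simp
    · rw [smul_comm]

lemma kbd_apply (c : Finset (Fin n) → M) (F : Finset (Fin n)) :
    kbd x M c F = ∑ a, if a ∈ F then 0 else (ksg R a F * x a) • c (insert a F) := rfl

lemma kbd_map (g : M →ₗ[R] N) (c : Finset (Fin n) → M) (F : Finset (Fin n)) :
    kbd x N (fun G => g (c G)) F = g (kbd x M c F) := by
  simp only [kbd_apply, map_sum]
  refine Finset.sum_congr rfl fun a _ => ?_
  split_ifs <;> simp

lemma kbd_mem (U : Submodule R M) (c : Finset (Fin n) → M) (h : ∀ F, c F ∈ U)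
    (F : Finset (Fin n)) : kbd x M c F ∈ U := by
  rw [kbd_apply]
  refine Submodule.sum_mem _ fun a _ => ?_
  split_ifs
  · simp
  · exact U.smul_mem _ (h _)

lemma kbd_kbd (c : Finset (Fin n) → M) : kbd x M (kbd x M c) = 0 := by
  funext F
  have h1 : kbd x M (kbd x M c) F = ∑ a, ∑ b, if a ∈ F ∨ b ∈ F ∨ a = b then 0 else
      (x a * x b) • (ksg R a F * ksg R b (insert a F)) • c (insert b (insert a F)) := by
    rw [kbd_apply]
    refine Finset.sum_congr rfl fun a _ => ?_
    split_ifs with h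
    · simp [h]
    · rw [kbd_apply, Finset.smul_sum]
      refine Finset.sum_congr rfl fun b _ => ?_
      by_cases hb : b ∈ F
      · simp [hb]
      · by_cases hab : b = a
        · simp [hab]
        · have hab' : a ≠ b := fun e => hab e.symm
          simp only [Finset.mem_insert, hab, hb, h, hab', or_self, if_false, smul_smul]
          congr 1; ring
  rw [h1, ← Finset.sum_product']
  refine Finset.sum_involution (fun p _ => (p.2, p.1)) ?_ ?_ ?_ ?_
  · rintro ⟨a, b⟩ _
    by_cases h : a ∈ F ∨ b ∈ F ∨ a = b
    · have h' : b ∈ F ∨ a ∈ F ∨ b = a := by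
        rcases h with h | h | h
        · exact Or.inr (Or.inl h)
        · exact Or.inl h
        · exact Or.inr (Or.inr h.symm)
      simp [h, h']
    · have h' : ¬ (b ∈ F ∨ a ∈ F ∨ b = a) := by
        intro h'
        apply h
        rcases h' with h | h | h
        · exact Or.inr (Or.inl h)
        · exact Or.inl h
        · exact Or.inr (Or.inr h.symm)
      simp only [if_neg h, if_neg h']
      push Not at h
      rw [ksg_anti a b F h.1 h.2.1 h.2.2, Finset.insert_comm b a, mul_comm (x b)]
      simp
  · rintro ⟨a, b⟩ _ h hh
    apply h
    simp only [Prod.mk.injEq] at hh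
    simp [hh.1]
  · simp
  · simp

def kh (a : Fin n) (c : Finset (Fin n) → M) : Finset (Fin n) → M :=
  fun F => if a ∈ F then ksg R a (F.erase a) • c (F.erase a) else 0

lemma kbd_kh (a : Fin n) (c : Finset (Fin n) → M) (F : Finset (Fin n)) :
    kbd x M (kh (R := R) a c) F + kh (R := R) a (kbd x M c) F = x a • c F := by
  by_cases ha : a ∈ F
  · obtain ⟨G, hG, rfl⟩ : ∃ G, a ∉ G ∧ F = insert a G :=
      ⟨F.erase a, by simp, (Finset.insert_erase ha).symm⟩
    have e : (insert a G).erase a = G := Finset.erase_insert hG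
    simp only [kh, ha, if_true, e, kbd_apply, Finset.smul_sum]
    rw [← Finset.sum_add_distrib, Finset.sum_eq_single a]
    · simp [hG, smul_smul, ← mul_assoc, ksg_sq]
    · intro b _ hb
      by_cases hbG : b ∈ G
      · simp [hbG]
      · have h2 : (insert b (insert a G)).erase a = insert b G := by
          rw [Finset.insert_comm, Finset.erase_insert]
          simp [hG, Ne.symm hb]
        simp only [Finset.mem_insert, hb, hbG, or_self, if_false, true_or, or_true, if_true, h2,
          smul_smul]
        rw [← add_smul]
        have := ksg_anti (R := R) b a G hbG hG hb
        have h3 : ksg R b (insert a G) * x b * ksg R a (insert b G) +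
          ksg R a G * (ksg R b G * x b) = 0 := by
          have s1 := ksg_sq (R := R) a G
          have s2 := ksg_sq (R := R) b G
          rw [ksg_insert a b G hG, ksg_insert b a G hbG]
          rcases lt_or_gt_of_ne hb with h | h
          · simp [h, h.not_gt]; ring
          · simp [h, h.not_gt]; ring
        rw [h3, zero_smul]
    · simp
  · have : kh (R := R) a (kbd x M c) F = 0 := by simp [kh, ha]
    rw [this, add_zero, kbd_apply, Finset.sum_eq_single a]
    · simp only [ha, if_false, kh, Finset.mem_insert_self, if_true, Finset.erase_insert ha,
        smul_smul]
      rw [mul_right_comm, ksg_sq, one_mul]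
    · intro b _ hb
      simp [kh, ha, Ne.symm hb]
    · simp

/-- vanishing of Koszul homology in degree `i` -/
def KVan (M : Type) [AddCommGroup M] [Module R M] (i : ℕ) : Prop :=
  ∀ c : Finset (Fin n) → M, (∀ F, F.card ≠ i → c F = 0) → kbd x M c = 0 → ∃ w, c = kbd x M w

lemma kh_supp (a : Fin n) (c : Finset (Fin n) → M) (i : ℕ) (hc : ∀ F, F.card ≠ i → c F = 0)
    (F : Finset (Fin n)) (hF : F.card ≠ i + 1) : kh (R := R) a c F = 0 := by
  unfold kh
  split_ifs with h
  · rw [hc, smul_zero]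
    have := Finset.card_erase_add_one h
    omega
  · rfl

lemma kbd_supp (c : Finset (Fin n) → M) (i : ℕ) (hc : ∀ F, F.card ≠ i + 1 → c F = 0)
    (F : Finset (Fin n)) (hF : F.card ≠ i) : kbd x M c F = 0 := by
  rw [kbd_apply]
  refine Finset.sum_eq_zero fun a _ => ?_
  split_ifs with h
  · rfl
  · rw [hc, smul_zero]
    rw [Finset.card_insert_of_notMem h]; omega

lemma exists_hom (y : R) (hy : y ∈ Ideal.span (Set.range x)) (i : ℕ) (c : Finset (Fin n) → M)
    (hc : ∀ F, F.card ≠ i → c F = 0) :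
    ∃ u u' : Finset (Fin n) → M, (∀ F, F.card ≠ i + 1 → u F = 0) ∧
      (∀ F, kbd x M u F + u' F = y • c F) ∧
      (∀ V : Submodule R M, (∀ F, kbd x M c F ∈ V) → ∀ F, u' F ∈ V) := by
  obtain ⟨g, rfl⟩ := Ideal.mem_span_range_iff_exists_fun.1 hy
  refine ⟨∑ a, g a • kh (R := R) a c, fun F => ∑ a, g a • kh (R := R) a (kbd x M c) F, ?_, ?_, ?_⟩
  · intro F hF
    simp [kh_supp _ c i hc F hF]
  · intro F
    simp only [map_sum, map_smul, Finset.sum_apply, Pi.smul_apply, ← Finset.sum_add_distrib,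
      ← smul_add, kbd_kh, Finset.sum_smul, smul_smul]
  · intro V hV F
    refine Submodule.sum_mem _ fun a _ => V.smul_mem _ ?_
    unfold kh
    split_ifs
    · exact V.smul_mem _ (hV _)
    · simp

lemma mk_quotSMul_eq_zero (y : R) (m : M) :
    (y • (⊤ : Submodule R M)).mkQ m = 0 ↔ ∃ t, m = y • t := by
  rw [Submodule.mkQ_apply, Submodule.Quotient.mk_eq_zero,
    Submodule.mem_smul_pointwise_iff_exists]
  simp [eq_comm]

lemma KVan_down (y : R) (hy : y ∈ Ideal.span (Set.range x)) (hreg : IsSMulRegular M y) (i : ℕ)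
    (h : KVan x (QuotSMulTop y M) (i + 1)) : KVan x M i := by
  intro c hc hcyc
  obtain ⟨u, u', hu, huu, hV⟩ := exists_hom x y hy i c hc
  have hu0 : ∀ F, u' F = 0 := by
    simpa using hV ⊥ (by simp [hcyc])
  simp only [hu0, add_zero] at huu
  let q := (y • (⊤ : Submodule R M)).mkQ
  obtain ⟨v, hv⟩ := h (fun F => q (u F)) (fun F hF => by simp [hu F hF]) (by
    funext F
    refine (kbd_map x q u F).trans ?_
    exact (mk_quotSMul_eq_zero _ _).2 ⟨_, huu F⟩)
  have hs : Function.Surjective q := Submodule.mkQ_surjective _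
  choose l hl using hs
  have hw : ∀ F, ∃ t, u F - kbd x M (fun G => l (v G)) F = y • t := by
    intro F
    refine (mk_quotSMul_eq_zero _ _).1 ?_
    have h1 := congrFun hv F
    have h2 := kbd_map x q (fun G => l (v G)) F
    simp only [hl] at h2
    show q _ = 0
    rw [map_sub, ← h2]
    exact sub_eq_zero.2 h1
  choose w hw using hw
  refine ⟨w, ?_⟩
  funext F
  apply hreg
  show y • c F = y • kbd x M w F
  have h3 : u = kbd x M (fun G => l (v G)) + y • w := by
    funext F
    simp [← hw F]
  rw [← huu F, h3, map_add, kbd_kbd, map_smul, zero_add, Pi.smul_apply]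

lemma KVan_up (y : R) (hreg : IsSMulRegular M y) (i : ℕ)
    (h : KVan x M i) (h' : KVan x M (i + 1)) : KVan x (QuotSMulTop y M) (i + 1) := by
  classical
  intro c hc hcyc
  let q := (y • (⊤ : Submodule R M)).mkQ
  have hs : Function.Surjective q := Submodule.mkQ_surjective _
  choose l hl using hs
  let u : Finset (Fin n) → M := fun F => if F.card = i + 1 then l (c F) else 0
  have hu : ∀ F, q (u F) = c F := by
    intro F
    by_cases hF : F.card = i + 1
    · simp [u, hF, hl]
    · simp [u, hF, hc F hF]
  have hu0 : ∀ F, F.card ≠ i + 1 → u F = 0 := fun F hF => by simp [u, hF]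
  have hw : ∀ F, ∃ t, kbd x M u F = y • t := by
    intro F
    refine (mk_quotSMul_eq_zero _ _).1 ?_
    refine (kbd_map x q u F).symm.trans ?_
    simp only [hu]
    exact congrFun hcyc F
  choose w hw using hw
  have hw' : kbd x M u = y • w := funext hw
  obtain ⟨v, hv⟩ := h w (fun F hF => by
      apply hreg
      show y • w F = y • 0
      rw [← hw, kbd_supp x u i hu0 F hF, smul_zero]) (by
      funext F
      apply hreg
      show y • kbd x M w F = y • 0
      have := congrFun (kbd_kbd x u) F
      rw [hw', map_smul] at this
      rw [smul_zero]; exact this)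
  -- trim v
  let v' : Finset (Fin n) → M := fun F => if F.card = i + 1 then v F else 0
  have hv' : kbd x M v' = w := by
    funext F
    by_cases hF : F.card = i
    · rw [hv, kbd_apply, kbd_apply]
      refine Finset.sum_congr rfl fun a _ => ?_
      split_ifs with ha
      · rfl
      · simp [v', Finset.card_insert_of_notMem ha, hF]
    · rw [kbd_supp x v' i (fun F hF => by simp [v', hF]) F hF]
      apply hreg
      show y • 0 = y • w F
      rw [← hw, kbd_supp x u i hu0 F hF, smul_zero]
  obtain ⟨t, ht⟩ := h' (u - y • v') (fun F hF => by simp [hu0 F hF, v', hF]) (by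
    rw [map_sub, map_smul, hv', hw', sub_self])
  refine ⟨fun F => q (t F), ?_⟩
  funext F
  refine Eq.trans ?_ (kbd_map x q t F).symm
  rw [← ht, ← hu F]
  show q (u F) = q (u F - y • v' F)
  have h0 : q (y • v' F) = 0 := (mk_quotSMul_eq_zero _ _).2 ⟨_, rfl⟩
  rw [map_sub, h0, sub_zero]

lemma KVan_up_zero (y : R) (h : KVan x M 0) : KVan x (QuotSMulTop y M) 0 := by
  classical
  intro c hc hcyc
  let q := (y • (⊤ : Submodule R M)).mkQ
  have hs : Function.Surjective q := Submodule.mkQ_surjective _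
  choose l hl using hs
  let u : Finset (Fin n) → M := fun F => if F.card = 0 then l (c F) else 0
  have hu : ∀ F, q (u F) = c F := by
    intro F
    by_cases hF : F.card = 0
    · simp only [u, hF, if_true, hl]
    · simp only [u, hF, if_false, map_zero, hc F hF]
  obtain ⟨t, ht⟩ := h u (fun F hF => by simp only [u, hF, if_false]) (by
    funext F
    rw [kbd_apply]
    refine Finset.sum_eq_zero fun a _ => ?_
    split_ifs with ha
    · rfl
    · simp [u])
  refine ⟨fun F => q (t F), ?_⟩
  funext F
  refine Eq.trans ?_ (kbd_map x q t F).symm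
  rw [← ht, ← hu F]

lemma KVan_of_reg (rs : List R) (hrs : ∀ y ∈ rs, y ∈ Ideal.span (Set.range x)) :
    ∀ (M : Type) [AddCommGroup M] [Module R M], RingTheory.Sequence.IsWeaklyRegular M rs →
    ∀ i, n < i + rs.length → KVan x M i := by
  induction rs with
  | nil =>
    intro M _ _ _ i hi c hc _
    refine ⟨0, ?_⟩
    funext F
    rw [hc F, map_zero]
    · rfl
    · have := Finset.card_le_univ F
      simp at this hi
      omega
  | cons y rs ih =>
    intro M _ _ h i hi
    rw [RingTheory.Sequence.isWeaklyRegular_cons_iff] at h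
    refine KVan_down x y (hrs y (by simp)) h.1 i ?_
    refine ih (fun z hz => hrs z (by simp [hz])) _ h.2 (i + 1) ?_
    simp at hi
    omega

lemma exists_reg [IsNoetherianRing R] (hmax : (Ideal.span (Set.range x)).IsMaximal) (k : ℕ) :
    ∀ (M : Type) [AddCommGroup M] [Module R M] [Module.Finite R M],
    (∀ i, n < i + k → KVan x M i) →
    ∃ rs : List R, rs.length = k ∧ (∀ y ∈ rs, y ∈ Ideal.span (Set.range x)) ∧
      RingTheory.Sequence.IsWeaklyRegular M rs := by
  induction k with
  | zero => intro M _ _ _ _; exact ⟨[], rfl, by simp, by simp⟩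
  | succ k ih =>
    intro M _ _ _ h
    have h1 : ∃ y ∈ Ideal.span (Set.range x), IsSMulRegular M y := by
      by_contra hcon
      push Not at hcon
      have hsub : ((Ideal.span (Set.range x) : Ideal R) : Set R) ⊆
          ⋃ p ∈ associatedPrimes R M, ((id p : Ideal R) : Set R) := by
        simp only [id]
        rw [biUnion_associatedPrimes_eq_compl_regular]
        exact fun y hy => hcon y hy
      obtain ⟨P, hP, hle⟩ := (Ideal.subset_union_prime_finite (associatedPrimes.finite R M)
        0 0 (fun _ h _ _ => h.isPrime)).1 hsub
      have hPe := hmax.eq_of_le hP.isPrime.ne_top hle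
      subst hPe
      rw [AssociatedPrimes.mem_iff, isAssociatedPrime_iff] at hP
      obtain ⟨_, m, hm⟩ := hP
      have hmx : ∀ a, x a • m = 0 := by
        intro a
        have : x a ∈ Ideal.span (Set.range x) := Ideal.subset_span ⟨a, rfl⟩
        rw [hm] at this
        simpa [Submodule.mem_colon_singleton] using this
      obtain ⟨w, hw⟩ := h n (by omega) (fun F => if F = Finset.univ then m else 0) (by
          intro F hF
          rw [if_neg]
          rintro rfl
          simp at hF) (by
          funext F
          rw [kbd_apply]
          refine Finset.sum_eq_zero fun a _ => ?_
          split_ifs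
          · rfl
          · rw [mul_smul, hmx, smul_zero]
          · simp)
      have h0 := congrFun hw Finset.univ
      simp [kbd_apply] at h0
      rw [h0] at hm
      apply hmax.ne_top
      rw [hm]
      ext z; simp [Submodule.mem_colon_singleton]
    obtain ⟨y, hy, hreg⟩ := h1
    obtain ⟨rs, h2, h3, h4⟩ := ih (QuotSMulTop y M) (fun i hi => by
      rcases i with _ | i
      · exact KVan_up_zero x y (h 0 (by omega))
      · exact KVan_up x y hreg i (h i (by omega)) (h (i+1) (by omega)))
    refine ⟨y :: rs, by simp [h2], ?_, ?_⟩
    · simpa using ⟨hy, h3⟩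
    · rw [RingTheory.Sequence.isWeaklyRegular_cons_iff]
      exact ⟨hreg, h4⟩
end kos

section mon
variable {n : ℕ} {K : Type} [Field K]

/-- relative Koszul vanishing -/
def KRel {R : Type} [CommRing R] (x : Fin n → R) (U V : Ideal R) (i : ℕ) : Prop :=
  ∀ c : Finset (Fin n) → R, (∀ F, c F ∈ U) → (∀ F, F.card ≠ i → c F = 0) →
    (∀ F, kbd x R c F ∈ V) → ∃ w : Finset (Fin n) → R, (∀ F, w F ∈ U) ∧ ∀ F, c F - kbd x R w F ∈ V

lemma KRel_trans {R : Type} [CommRing R] (x : Fin n → R) (U U' V : Ideal R) (i : ℕ)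
    (hU : U' ≤ U) (hV : V ≤ U')
    (h1 : ∀ i', i' = i → KRel x U U' i') (h2 : KRel x U' V i) : KRel x U V i := by
  intro c hc hs hb
  obtain ⟨w, hw, hcw⟩ := h1 i rfl c hc hs (fun F => hV (hb F))
  -- trim w
  let w' : Finset (Fin n) → R := fun F => if F.card = i + 1 then w F else 0
  have hw' : ∀ F, w' F ∈ U := by
    intro F
    by_cases hF : F.card = i + 1
    · simp only [w', hF, if_true]; exact hw F
    · simp only [w', hF, if_false]; exact U.zero_mem
  have hw0 : ∀ F, F.card ≠ i → kbd x R w' F = 0 :=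
    kbd_supp x w' i (fun F hF => by simp only [w', hF, if_false])
  have hcw' : ∀ F, c F - kbd x R w' F ∈ U' := by
    intro F
    by_cases hF : F.card = i
    · have : kbd x R w' F = kbd x R w F := by
        rw [kbd_apply, kbd_apply]
        refine Finset.sum_congr rfl fun a _ => ?_
        split_ifs with ha
        · rfl
        · simp [w', Finset.card_insert_of_notMem ha, hF]
      rw [this]; exact hcw F
    · rw [hw0 F hF, hs F hF, sub_zero]; exact U'.zero_mem
  obtain ⟨v, hv, hcv⟩ := h2 (c - kbd x R w') hcw' (fun F hF => by
      simp [hs F hF, hw0 F hF]) (fun F => by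
      rw [map_sub, kbd_kbd, sub_zero]; exact hb F)
  refine ⟨w' + v, fun F => U.add_mem (hw' F) (hU (hv F)), fun F => ?_⟩
  rw [map_add]
  have := hcv F
  simp only [Pi.sub_apply, Pi.add_apply] at this ⊢
  rwa [← sub_sub]

lemma X_mul_mem (A : Finset (Fin n)) (a : Fin n) (ha : a ∉ A) (p : MvPolynomial (Fin n) K)
    (h : X a * p ∈ Ideal.span ((X : Fin n → MvPolynomial (Fin n) K) '' (A : Set (Fin n)))) :
    p ∈ Ideal.span ((X : Fin n → MvPolynomial (Fin n) K) '' (A : Set (Fin n))) := by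
  rw [mem_ideal_span_X_image] at h ⊢
  intro m hm
  obtain ⟨b, hb, hmb⟩ := h (Finsupp.single a 1 + m) (by
    rw [support_X_mul]; simpa using hm)
  refine ⟨b, hb, ?_⟩
  have : a ≠ b := by rintro rfl; exact ha hb
  simpa [Finsupp.single_apply, this] using hmb

lemma KRel_prime (k : ℕ) : ∀ (A : Finset (Fin n)), A.card + k = n → ∀ i, A.card < i →
    KRel (X : Fin n → MvPolynomial (Fin n) K) ⊤ (Ideal.span (X '' (A : Set (Fin n)))) i := by
  induction k with
  | zero =>
    intro A hA i hi c hc hs hb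
    refine ⟨0, by simp, fun F => ?_⟩
    rw [hs F]
    · simp
    · have := Finset.card_le_univ F
      simp at this
      omega
  | succ k ih =>
    intro A hA i hi c hc hs hb
    obtain ⟨a, ha⟩ : ∃ a, a ∉ A := by
      by_contra h
      push Not at h
      have : A = Finset.univ := Finset.eq_univ_of_forall h
      rw [this] at hA
      simp at hA
    set P := Ideal.span ((X : Fin n → MvPolynomial (Fin n) K) '' (A : Set (Fin n))) with hP
    have hcard : (insert a A).card = A.card + 1 := Finset.card_insert_of_notMem ha
    obtain ⟨u, u', hu, huu, hV⟩ := exists_hom (X : Fin n → MvPolynomial (Fin n) K) (X a)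
      (Ideal.subset_span ⟨a, rfl⟩) i c hs
    have hu' := hV P hb
    have hins : ∀ p, p ∈ Ideal.span ((X : Fin n → MvPolynomial (Fin n) K) ''
        ((insert a A : Finset (Fin n)) : Set (Fin n))) ↔ ∃ t, p - X a * t ∈ P := by
      intro p
      rw [Finset.coe_insert, Set.image_insert_eq, Ideal.mem_span_insert]
      constructor
      · rintro ⟨t, z, hz, rfl⟩
        refine ⟨t, ?_⟩
        rw [mul_comm]; simpa using hz
      · rintro ⟨t, ht⟩
        exact ⟨t, _, ht, by ring⟩
    obtain ⟨v, -, hv⟩ := ih (insert a A) (by omega) (i + 1) (by omega) u (by simp) hu (by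
      intro F
      rw [hins]
      refine ⟨c F, ?_⟩
      have := huu F
      rw [smul_eq_mul] at this
      rw [← this]
      simpa using hu' F)
    simp only [hins] at hv
    choose w hw using hv
    refine ⟨w, by simp, fun F => ?_⟩
    apply X_mul_mem A a ha
    rw [← hP]
    have h1 := kbd_mem (X : Fin n → MvPolynomial (Fin n) K) P
      (u - kbd (X : Fin n → MvPolynomial (Fin n) K) _ v -
        (X a : MvPolynomial (Fin n) K) • w) hw F
    rw [map_sub, map_sub, kbd_kbd, map_smul, sub_zero] at h1
    have h2 := P.add_mem h1 (hu' F)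
    have := huu F
    simp only [Pi.sub_apply, Pi.smul_apply, smul_eq_mul] at h2 this ⊢
    rw [mul_sub, ← this]
    convert h2 using 1
    ring

noncomputable def esq (T : Finset (Fin n)) : Fin n →₀ ℕ := ∑ i ∈ T, Finsupp.single i 1

lemma esq_apply (T : Finset (Fin n)) (a : Fin n) : esq T a = if a ∈ T then 1 else 0 := by
  simp [esq, Finsupp.finsetSum_apply, Finsupp.single_apply]

lemma esq_degree (T : Finset (Fin n)) : (esq T).degree = T.card := by
  simp [esq, map_sum]

lemma sqMon_eq (T : Finset (Fin n)) : sqMon K T = monomial (esq T) 1 := by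
  rw [esq, monomial_sum_one]; rfl

lemma mem_span_sq (U : Set (Finset (Fin n))) (p : MvPolynomial (Fin n) K) :
    p ∈ Ideal.span (sqMon K '' U) ↔ ∀ m ∈ p.support, ∃ T ∈ U, ∀ a ∈ T, m a ≠ 0 := by
  have : sqMon K '' U = (fun s => monomial s (1 : K)) '' (esq '' U) := by
    rw [Set.image_image]
    exact Set.image_congr fun T _ => sqMon_eq T
  rw [this, mem_ideal_span_monomial_image]
  refine forall₂_congr fun m _ => ?_
  simp only [Set.exists_mem_image]
  refine exists_congr fun T => and_congr_right fun _ => ?_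
  rw [Finsupp.le_def]
  refine forall_congr' fun a => ?_
  rw [esq_apply]
  split_ifs with h
  · simp [h]; omega
  · simp [h]

lemma sq_mem_span_sq (U : Set (Finset (Fin n))) (T : Finset (Fin n)) :
    sqMon K T ∈ Ideal.span (sqMon K '' U) ↔ ∃ G ∈ U, G ⊆ T := by
  classical
  rw [mem_span_sq, sqMon_eq, support_monomial]
  simp [esq_apply, Finset.subset_iff]

lemma sqMon_insert (T : Finset (Fin n)) (a : Fin n) (ha : a ∉ T) :
    sqMon K (insert a T) = X a * sqMon K T := by
  simp [sqMon, Finset.prod_insert ha]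

lemma KRel_step (U' : Set (Finset (Fin n))) (F : Finset (Fin n)) (h1 : ∀ G ∈ U', ¬ G ⊆ F)
    (h2 : ∀ a ∉ F, insert a F ∈ U') (i : ℕ) (hi : n < i + F.card) :
    KRel (X : Fin n → MvPolynomial (Fin n) K) (Ideal.span (sqMon K '' (insert F U')))
      (Ideal.span (sqMon K '' U')) i := by
  intro c hc hs hb
  set I' := Ideal.span (sqMon K '' U') with hI'
  have hc' : ∀ G, ∃ t, c G - sqMon K F * t ∈ I' ∧ (G.card ≠ i → t = 0) := by
    intro G
    by_cases hG : G.card = i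
    · have := hc G
      rw [Set.image_insert_eq, Ideal.mem_span_insert] at this
      obtain ⟨t, z, hz, h⟩ := this
      refine ⟨t, ?_, fun h => absurd hG h⟩
      rw [h, mul_comm]; simpa using hz
    · exact ⟨0, by rw [hs G hG]; simp, fun _ => rfl⟩
  choose c' hcc hcs using hc'
  have hfwd : ∀ p ∈ Ideal.span ((X : Fin n → MvPolynomial (Fin n) K) '' ((Fᶜ : Finset (Fin n)) : Set (Fin n))),
      sqMon K F * p ∈ I' := by
    intro p hp
    have hle : Ideal.span ((X : Fin n → MvPolynomial (Fin n) K) '' ((Fᶜ : Finset (Fin n)) : Set (Fin n)))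
      ≤ Submodule.comap (LinearMap.mulLeft _ (sqMon K F)) I' := by
      rw [Ideal.span_le]
      rintro _ ⟨a, ha, rfl⟩
      have ha' : a ∉ F := by simpa using ha
      show sqMon K F * X a ∈ I'
      rw [mul_comm, ← sqMon_insert F a ha']
      exact Ideal.subset_span ⟨_, h2 a ha', rfl⟩
    exact hle hp
  have hbwd : ∀ p, sqMon K F * p ∈ I' →
      p ∈ Ideal.span ((X : Fin n → MvPolynomial (Fin n) K) '' ((Fᶜ : Finset (Fin n)) : Set (Fin n))) := by
    intro p hp
    rw [mem_ideal_span_X_image]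
    intro m hm
    rw [hI', mem_span_sq] at hp
    obtain ⟨T, hT, hTm⟩ := hp (esq F + m) (by
      rw [mem_support_iff, sqMon_eq, coeff_monomial_mul, one_mul]
      exact mem_support_iff.1 hm)
    obtain ⟨a, haT, haF⟩ := Finset.not_subset.1 (h1 T hT)
    refine ⟨a, by simpa using haF, ?_⟩
    simpa [esq_apply, haF] using hTm a haT
  have hcardF := Finset.card_compl F
  have hle := Finset.card_le_univ F
  simp only [Fintype.card_fin] at hcardF hle
  obtain ⟨w, -, hw⟩ := KRel_prime F.card (Fᶜ) (by omega) i (by omega) c' (by simp)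
    (fun G hG => hcs G hG) (by
      intro G
      apply hbwd
      have h3 := kbd_mem (X : Fin n → MvPolynomial (Fin n) K) I' (c - sqMon K F • c') hcc G
      rw [map_sub, map_smul] at h3
      have := I'.sub_mem (hb G) h3
      simpa using this)
  refine ⟨sqMon K F • w, ?_, ?_⟩
  · intro G
    exact Ideal.mul_mem_right _ _ (Ideal.subset_span ⟨F, by simp, rfl⟩)
  · intro G
    have h4 := I'.add_mem (hcc G) (hfwd _ (hw G))
    rw [map_smul]
    simp only [Pi.smul_apply, smul_eq_mul]
    convert h4 using 1
    ring

lemma KRel_all (d k : ℕ) : ∀ (U V : Finset (Finset (Fin n))), V ⊆ U → (U \ V).card = k →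
    (∀ F ∈ U, d ≤ F.card) → (∀ F ∈ U, ∀ G, F ⊆ G → G ∈ U) → (∀ F ∈ V, ∀ G, F ⊆ G → G ∈ V) →
    ∀ i, n < i + d → KRel (X : Fin n → MvPolynomial (Fin n) K)
      (Ideal.span (sqMon K '' (U : Set (Finset (Fin n)))))
      (Ideal.span (sqMon K '' (V : Set (Finset (Fin n))))) i := by
  induction k with
  | zero =>
    intro U V hVU hk _ _ _ i _
    have : U = V := by
      rw [Finset.card_eq_zero, Finset.sdiff_eq_empty_iff_subset] at hk
      exact hk.antisymm hVU
    subst this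
    intro c hc hs hb
    exact ⟨0, by simp, by simpa using hc⟩
  | succ k ih =>
    intro U V hVU hk hd hUu hVu i hi
    obtain ⟨F, hF, hmin⟩ := (U \ V).exists_minimal (by rw [← Finset.card_pos]; omega)
    rw [Finset.mem_sdiff] at hF
    have hins : insert F (U.erase F) = U := Finset.insert_erase hF.1
    have hnot : ∀ G ∈ U.erase F, ¬ G ⊆ F := by
      intro G hG hGF
      rw [Finset.mem_erase] at hG
      have hGV : G ∉ V := fun h => hF.2 (hVu G h F hGF)
      exact hG.1 (le_antisymm hGF (hmin (Finset.mem_sdiff.2 ⟨hG.2, hGV⟩) hGF))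
    have hVe : V ⊆ U.erase F := fun G hG =>
      Finset.mem_erase.2 ⟨fun h => hF.2 (h ▸ hG), hVU hG⟩
    refine KRel_trans _ _ (Ideal.span (sqMon K '' ((U.erase F : Finset (Finset (Fin n))) :
      Set (Finset (Fin n))))) _ i ?_ ?_ ?_ ?_
    · exact Ideal.span_mono (Set.image_mono (by exact_mod_cast Finset.erase_subset F U))
    · exact Ideal.span_mono (Set.image_mono (by exact_mod_cast hVe))
    · rintro i' rfl
      have := KRel_step (K := K) ((U.erase F : Finset (Finset (Fin n))) : Set _) F
        (fun G hG => hnot G hG) (fun a ha => by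
          simp only [Finset.mem_coe, Finset.mem_erase]
          refine ⟨fun h => ha (h ▸ Finset.mem_insert_self a F),
            hUu F hF.1 _ (Finset.subset_insert a F)⟩) i' (by have := hd F hF.1; omega)
      rwa [← Finset.coe_insert, hins] at this
    · refine ih _ _ hVe ?_ (fun G hG => hd G (Finset.mem_of_mem_erase hG)) ?_ hVu i hi
      · have : U.erase F \ V = (U \ V).erase F := by
          ext G; simp only [Finset.mem_sdiff, Finset.mem_erase]; tauto
        rw [this, Finset.card_erase_of_mem (Finset.mem_sdiff.2 hF), hk]; rfl
      · intro G hG H hGH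
        refine Finset.mem_erase.2 ⟨?_, hUu G (Finset.mem_of_mem_erase hG) H hGH⟩
        rintro rfl
        exact hnot G hG hGH

lemma idealQuot_mk_eq_zero {R : Type} [CommRing R] (I J : Ideal R) (p : I) :
    (Submodule.comap I.subtype (J : Submodule R R)).mkQ p = 0 ↔ (p : R) ∈ J := by
  rw [Submodule.mkQ_apply, Submodule.Quotient.mk_eq_zero]; rfl

lemma KVan_of_KRel {R : Type} [CommRing R] (x : Fin n → R) (I J : Ideal R) (i : ℕ)
    (h : KRel x I J i) : KVan x (idealQuot I J) i := by
  intro c hc hcyc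
  let q := (Submodule.comap I.subtype (J : Submodule R R)).mkQ
  have hs : Function.Surjective q := Submodule.mkQ_surjective _
  choose l hl using hs
  let u : Finset (Fin n) → I := fun F => if F.card = i then l (c F) else 0
  have hu : ∀ F, q (u F) = c F := by
    intro F
    by_cases hF : F.card = i
    · simp only [u, hF, if_true, hl]
    · simp only [u, hF, if_false, map_zero, hc F hF]
  have hsub : ∀ v : Finset (Fin n) → I, ∀ F, kbd x R (fun G => (v G : R)) F = (kbd x I v F : I) :=
    fun v F => kbd_map x I.subtype v F
  obtain ⟨w, hw, hcw⟩ := h (fun F => u F) (fun F => (u F).2)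
    (fun F hF => by simp only [u, hF, if_false]; rfl) (by
      intro F
      rw [hsub, ← idealQuot_mk_eq_zero I J]
      refine (kbd_map x q u F).symm.trans ?_
      simp only [hu]
      exact congrFun hcyc F)
  let w' : Finset (Fin n) → I := fun F => ⟨w F, hw F⟩
  refine ⟨fun F => q (w' F), ?_⟩
  funext F
  refine Eq.trans ?_ (kbd_map x q w' F).symm
  rw [← hu F, ← sub_eq_zero, ← map_sub]
  rw [idealQuot_mk_eq_zero I J]
  have := hcw F
  rw [show w = fun G => (w' G : R) from rfl, hsub] at this
  exact this

lemma KRel_of_KVan {R : Type} [CommRing R] (x : Fin n → R) (I J : Ideal R) (i : ℕ)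
    (h : KVan x (idealQuot I J) i) : KRel x I J i := by
  intro c hc hs hb
  let q := (Submodule.comap I.subtype (J : Submodule R R)).mkQ
  have hsur : Function.Surjective q := Submodule.mkQ_surjective _
  choose l hl using hsur
  have hsub : ∀ v : Finset (Fin n) → I, ∀ F, kbd x R (fun G => (v G : R)) F = (kbd x I v F : I) :=
    fun v F => kbd_map x I.subtype v F
  let u : Finset (Fin n) → I := fun F => ⟨c F, hc F⟩
  obtain ⟨w, hw⟩ := h (fun F => q (u F)) (fun F hF => by
      rw [idealQuot_mk_eq_zero I J]
      show c F ∈ J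
      rw [hs F hF]; exact J.zero_mem) (by
      funext F
      refine (kbd_map x q u F).trans ?_
      refine (idealQuot_mk_eq_zero I J _).2 ?_
      rw [← hsub]
      exact hb F)
  refine ⟨fun F => l (w F), fun F => (l (w F)).2, fun F => ?_⟩
  rw [hsub]
  show ((u F - kbd x I (fun G => l (w G)) F : I) : R) ∈ J
  rw [← idealQuot_mk_eq_zero I J, map_sub, sub_eq_zero]
  refine (congrFun hw F).trans ?_
  rw [← kbd_map]
  simp only [q] at hl
  simp only [hl]

lemma maxGraded_isMaximal : (Ideal.span (Set.range (X : Fin n → MvPolynomial (Fin n) K))).IsMaximal := by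
  have : Ideal.span (Set.range (X : Fin n → MvPolynomial (Fin n) K)) =
      RingHom.ker (constantCoeff : MvPolynomial (Fin n) K →+* K) := by
    ext p
    rw [← Set.image_univ, mem_ideal_span_X_image, RingHom.mem_ker, constantCoeff_eq]
    constructor
    · intro h
      by_contra h0
      obtain ⟨a, _, ha⟩ := h 0 (mem_support_iff.2 h0)
      simp at ha
    · intro h m hm
      by_contra hcon
      push Not at hcon
      have : m = 0 := by ext a; simpa using hcon a
      rw [this, mem_support_iff] at hm
      exact hm h
  rw [this]
  refine RingHom.ker_isMaximal_of_surjective _ fun a => ⟨C a, by simp⟩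

end mon

/-- Proposition 1.10. -/
theorem stmt_6 (n : ℕ) (K : Type) [Field K] (d : ℕ) (hd : 0 < d)
    (I J : Ideal (MvPolynomial (Fin n) K)) (hJ0 : J ≠ ⊥) (hJI : J < I)
    (r : ℕ) (hr : 0 < r) (f : Fin r → Finset (Fin n)) (hfinj : Function.Injective f)
    (hfd : ∀ i, (f i).card = d)
    (hIgen : I = Ideal.span (Set.range fun i => sqMon K (f i)))
    (hJgen : GenBySqMonOfDeg K (fun k => k = d + 1) J)
    (s : ℕ) (b : Fin s → Finset (Fin n)) (hbinj : Function.Injective b)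
    (hbd : ∀ j, (b j).card = d + 1)
    (hbI : ∀ j, sqMon K (b j) ∈ I) (hbJ : ∀ j, sqMon K (b j) ∉ J)
    (hball : ∀ T : Finset (Fin n), T.card = d + 1 → sqMon K T ∈ I →
      sqMon K T ∉ J → ∃ j, T = b j)
    (hrs : s < r)
    (hone : ∀ i : Fin r, ∀ j k : Fin s, f i ⊆ b j → f i ⊆ b k → j = k) :
    moduleDepth (maxGraded K n) (idealQuot I J) = (d : ℕ∞) := by
    classical
  set 𝔪 : Ideal (MvPolynomial (Fin n) K) := idealOfVars (Fin n) K with h𝔪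
  obtain ⟨GJ, hGJ, hJ⟩ := hJgen
  have hIs : I = Ideal.span (sqMon K '' (Set.range f)) := by
    rw [hIgen, ← Set.range_comp]; rfl
  have hsqpow : ∀ T : Finset (Fin n), ∀ k, k ≤ T.card → sqMon K T ∈ 𝔪 ^ k := by
    intro T k hk
    rw [sqMon_eq, monomial_mem_pow_idealOfVars_iff k _ one_ne_zero, esq_degree]
    exact hk
  have hIpow : I ≤ 𝔪 ^ d := by
    rw [hIs, Ideal.span_le]
    rintro _ ⟨_, ⟨i, rfl⟩, rfl⟩
    exact hsqpow _ _ (hfd i).ge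
  have hJpow : J ≤ 𝔪 ^ (d + 1) := by
    rw [hJ, Ideal.span_le]
    rintro _ ⟨T, hT, rfl⟩
    exact hsqpow _ _ (hGJ T hT).ge
  have hmI : 𝔪 * I ≤ 𝔪 ^ (d + 1) := by
    rw [pow_succ']
    exact Ideal.mul_mono_right hIpow
  have hfI : ∀ i, sqMon K (f i) ∈ I := by
    intro i
    rw [hIgen]
    exact Ideal.subset_span ⟨i, rfl⟩
  have hnotpow : ∀ (i : Fin r) (t : K), t ≠ 0 → C t * sqMon K (f i) ∉ 𝔪 ^ (d + 1) := by
    intro i t ht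
    rw [sqMon_eq, C_mul_monomial, mul_one, monomial_mem_pow_idealOfVars_iff _ _ ht, esq_degree,
      hfd]
    omega
  have hdn : d ≤ n := by
    have := Finset.card_le_univ (f ⟨0, hr⟩)
    rw [hfd] at this
    simpa using this
  apply le_antisymm
  · refine sSup_le ?_
    rintro _ ⟨rs, rfl, hrs', hreg⟩
    rw [Nat.cast_le]
    by_contra hlt
    push Not at hlt
    have hvan := KRel_of_KVan _ _ _ _ (KVan_of_reg (X : Fin n → MvPolynomial (Fin n) K) rs hrs' (idealQuot I J)
      hreg.toIsWeaklyRegular (n - d) (by omega))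
    -- the linear system
    let g : (Fin r → K) → Finset (Fin n) → K := fun γ G => ∑ i, if Gᶜ = f i then γ i else 0
    let L : (Fin r → K) →ₗ[K] (Fin s → K) :=
      { toFun := fun γ j => ∑ a, if a ∈ (b j)ᶜ then 0 else
          ksg K a (b j)ᶜ * g γ (insert a (b j)ᶜ)
        map_add' := by
          intro γ γ'
          funext j
          simp only [Pi.add_apply, ← Finset.sum_add_distrib]
          refine Finset.sum_congr rfl fun a _ => ?_
          split_ifs
          · simp
          · rw [← mul_add]
            congr 1
            simp only [g, ← Finset.sum_add_distrib]
            refine Finset.sum_congr rfl fun i _ => ?_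
            split_ifs <;> simp
        map_smul' := by
          intro t γ
          funext j
          simp only [Pi.smul_apply, smul_eq_mul, RingHom.id_apply, Finset.mul_sum]
          refine Finset.sum_congr rfl fun a _ => ?_
          split_ifs
          · simp
          · rw [mul_left_comm]
            congr 1
            simp only [g, Finset.mul_sum]
            refine Finset.sum_congr rfl fun i _ => ?_
            split_ifs <;> simp }
    have hker : LinearMap.ker L ≠ ⊥ := L.ker_ne_bot_of_finrank_lt (by simpa using hrs)
    obtain ⟨γ, hγ, hγ0⟩ := (Submodule.ne_bot_iff _).1 hker
    have hγL : ∀ j, (∑ a, if a ∈ (b j)ᶜ then 0 else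
          ksg K a (b j)ᶜ * g γ (insert a (b j)ᶜ)) = 0 := fun j => congrFun hγ j
    obtain ⟨i₀, hi₀⟩ := Function.ne_iff.1 hγ0
    have hgf : ∀ i, g γ (f i)ᶜ = γ i := by
      intro i
      simp only [g, compl_compl]
      rw [Finset.sum_eq_single i]
      · simp
      · intro k _ hk
        rw [if_neg]
        exact fun h => hk (hfinj h.symm)
      · simp
    have hgne : ∀ G, g γ G ≠ 0 → ∃ i, Gᶜ = f i := by
      intro G hG
      obtain ⟨i, _, hi⟩ := Finset.exists_ne_zero_of_sum_ne_zero hG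
      refine ⟨i, ?_⟩
      by_contra h
      simp [h] at hi
    let z : Finset (Fin n) → MvPolynomial (Fin n) K := fun G => C (g γ G) * sqMon K Gᶜ
    have hzb : ∀ F, kbd (X : Fin n → MvPolynomial (Fin n) K) _ z F =
        C (∑ a, if a ∈ F then 0 else ksg K a F * g γ (insert a F)) * sqMon K Fᶜ := by
      intro F
      rw [kbd_apply, map_sum, Finset.sum_mul]
      refine Finset.sum_congr rfl fun a _ => ?_
      split_ifs with ha
      · simp
      · have h1 : Fᶜ = insert a (insert a F)ᶜ := by
          ext t
          by_cases h : t = a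
          · subst h; simp [ha]
          · simp [h]
        have h2 : sqMon K Fᶜ = X a * sqMon K (insert a F)ᶜ := by
          conv_lhs => rw [h1]
          exact sqMon_insert _ _ (by simp)
        have h3 : (C (ksg K a F) : MvPolynomial (Fin n) K) = ksg _ a F := by
          simp [ksg]
        rw [h2, map_mul, h3, smul_eq_mul]
        simp only [z]
        ring
    obtain ⟨w, hw, hzw⟩ := hvan z (by
        intro F
        by_cases h : g γ F = 0
        · simp [z, h]
        · obtain ⟨i, hi⟩ := hgne F h
          simp only [z, hi]
          exact Ideal.mul_mem_left _ _ (hfI i)) (by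
        intro F hF
        by_cases h : g γ F = 0
        · simp [z, h]
        · obtain ⟨i, hi⟩ := hgne F h
          exfalso
          have h1 := hfd i
          rw [← hi, Finset.card_compl, Fintype.card_fin] at h1
          have := Finset.card_le_univ F
          rw [Fintype.card_fin] at this
          omega) (by
        intro F
        rw [hzb]
        by_cases h : (∑ a, if a ∈ F then 0 else ksg K a F * g γ (insert a F)) = 0
        · rw [h]; simp
        · apply Ideal.mul_mem_left
          by_contra hFJ
          obtain ⟨a, _, ha⟩ := Finset.exists_ne_zero_of_sum_ne_zero h
          have haF : a ∉ F := fun h => ha (by simp [h])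
          rw [if_neg haF] at ha
          obtain ⟨i, hi⟩ := hgne _ (right_ne_zero_of_mul ha)
          have hc1 := hfd i
          rw [← hi, Finset.card_compl, Fintype.card_fin, Finset.card_insert_of_notMem haF] at hc1
          have hc2 := Finset.card_compl F
          rw [Fintype.card_fin] at hc2
          have hFI : sqMon K Fᶜ ∈ I := by
            rw [hIs, sq_mem_span_sq]
            refine ⟨f i, ⟨i, rfl⟩, ?_⟩
            rw [← hi]
            exact Finset.compl_subset_compl.2 (Finset.subset_insert a F)
          obtain ⟨j, hj⟩ := hball Fᶜ (by omega) hFI hFJ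
          apply h
          have := hγL j
          rwa [← hj, compl_compl] at this)
    have h1 := hJpow (hzw (f i₀)ᶜ)
    have h2 : kbd (X : Fin n → MvPolynomial (Fin n) K) _ w (f i₀)ᶜ ∈ 𝔪 ^ (d + 1) := by
      apply hmI
      rw [kbd_apply]
      refine Ideal.sum_mem _ fun a _ => ?_
      split_ifs
      · exact Ideal.zero_mem _
      · rw [smul_eq_mul]
        exact Ideal.mul_mem_mul (Ideal.mul_mem_left _ _ (Ideal.subset_span ⟨a, rfl⟩)) (hw _)
    have h3 := Ideal.add_mem _ h1 h2
    rw [sub_add_cancel] at h3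
    simp only [z, hgf, compl_compl] at h3
    exact hnotpow i₀ _ hi₀ h3
  · let U : Finset (Finset (Fin n)) := Finset.univ.filter fun T => sqMon K T ∈ I
    let V : Finset (Finset (Fin n)) := Finset.univ.filter fun T => sqMon K T ∈ J
    have hup : ∀ (Q : Ideal (MvPolynomial (Fin n) K)) (F G : Finset (Fin n)), F ⊆ G →
        sqMon K F ∈ Q → sqMon K G ∈ Q := by
      intro Q F G hFG hF
      exact Ideal.mem_of_dvd _ (Finset.prod_dvd_prod_of_subset _ _ _ hFG) hF
    have hU : Ideal.span (sqMon K '' (U : Set (Finset (Fin n)))) = I := by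
      apply le_antisymm
      · rw [Ideal.span_le]
        rintro _ ⟨T, hT, rfl⟩
        simpa [U] using hT
      · conv_lhs => rw [hIs]
        refine Ideal.span_mono (Set.image_mono ?_)
        rintro _ ⟨i, rfl⟩
        simpa [U] using hfI i
    have hV : Ideal.span (sqMon K '' (V : Set (Finset (Fin n)))) = J := by
      apply le_antisymm
      · rw [Ideal.span_le]
        rintro _ ⟨T, hT, rfl⟩
        simpa [V] using hT
      · conv_lhs => rw [hJ]
        refine Ideal.span_mono (Set.image_mono ?_)
        intro T hT
        have : sqMon K T ∈ J := by rw [hJ]; exact Ideal.subset_span ⟨T, hT, rfl⟩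
        simpa [V] using this
    have hvan : ∀ i, n < i + d → KVan (X : Fin n → MvPolynomial (Fin n) K) (idealQuot I J) i := by
      intro i hi
      apply KVan_of_KRel
      have := KRel_all (K := K) d _ U V (by
        intro T hT
        simp only [U, V, Finset.mem_filter, Finset.mem_univ, true_and] at hT ⊢
        exact hJI.le hT) rfl (by
        intro T hT
        simp only [U, Finset.mem_filter, Finset.mem_univ, true_and] at hT
        rw [hIs, sq_mem_span_sq] at hT
        obtain ⟨_, ⟨i, rfl⟩, hi⟩ := hT
        rw [← hfd i]
        exact Finset.card_le_card hi) (by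
        intro T hT G hG
        simp only [U, Finset.mem_filter, Finset.mem_univ, true_and] at hT ⊢
        exact hup _ _ _ hG hT) (by
        intro T hT G hG
        simp only [V, Finset.mem_filter, Finset.mem_univ, true_and] at hT ⊢
        exact hup _ _ _ hG hT) i hi
      rwa [hU, hV] at this
    haveI : Module.Finite (MvPolynomial (Fin n) K) I := Module.IsNoetherian.finite _ _
    obtain ⟨rs, hlen, hmem, hweak⟩ := exists_reg (X : Fin n → MvPolynomial (Fin n) K)
      maxGraded_isMaximal d (idealQuot I J) hvan
    refine le_sSup ⟨rs, by rw [hlen], hmem, hweak, ?_⟩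
    intro htop
    have hle : Ideal.ofList rs ≤ 𝔪 := by
      rw [Ideal.ofList, Ideal.span_le]
      intro y hy
      exact hmem y hy
    have htop' : (⊤ : Submodule (MvPolynomial (Fin n) K) (idealQuot I J)) ≤ 𝔪 • ⊤ := by
      calc _ = _ := htop
        _ ≤ _ := Submodule.smul_mono_left hle
    let q := (Submodule.comap I.subtype (J : Submodule _ (MvPolynomial (Fin n) K))).mkQ
    have key : ∀ y ∈ 𝔪 • (⊤ : Submodule (MvPolynomial (Fin n) K) (idealQuot I J)),
        ∀ p : I, q p = y → (p : MvPolynomial (Fin n) K) ∈ 𝔪 ^ (d + 1) := by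
      intro y hy
      refine Submodule.smul_induction_on hy ?_ ?_
      · intro t ht m _ p hp
        obtain ⟨m', rfl⟩ : ∃ m', q m' = m := Submodule.mkQ_surjective _ m
        have h1 : q (p - t • m') = 0 := by rw [map_sub, map_smul, hp, sub_self]
        have h2 := hJpow ((idealQuot_mk_eq_zero I J _).1 h1)
        have h3 := hmI (Ideal.mul_mem_mul ht m'.2)
        have h4 := Ideal.add_mem _ h2 h3
        simpa using h4
      · intro y1 y2 h1 h2 p hp
        obtain ⟨p1, rfl⟩ : ∃ m', q m' = y1 := Submodule.mkQ_surjective _ y1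
        have h3 := h1 p1 rfl
        have h4 := h2 (p - p1) (by rw [map_sub, hp]; simp)
        have h5 := Ideal.add_mem _ h3 h4
        simpa using h5
    have := key (q ⟨_, hfI ⟨0, hr⟩⟩) (htop' trivial) _ rfl
    refine hnotpow ⟨0, hr⟩ 1 one_ne_zero ?_
    simpa using this
end

section
/- Suppose d = 1, f_i = x_i for i ∈ {1,…,r}, and every square-free monomial b_j of degree 2 in I \ J lies in the subring S' = K[x_1,…,x_r]. Then depth_S (I/J) = 1 (independently of r and of the number s of such monomials b_j; s may be greater than r). -/
open MvPolynomial

open scoped Pointwise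


lemma aux_sqMon (K : Type) [Field K] {n : ℕ} (T : Finset (Fin n)) :
    sqMon K T = monomial (∑ i ∈ T, Finsupp.single i 1) (1:K) := by
  unfold sqMon
  rw [MvPolynomial.monomial_sum_one]
  rfl

lemma aux_apply {n : ℕ} (T : Finset (Fin n)) (j : Fin n) :
    (∑ i ∈ T, Finsupp.single i 1 : Fin n →₀ ℕ) j = if j ∈ T then 1 else 0 := by
  classical
  rw [Finsupp.finsetSum_apply]
  simp [Finsupp.single_apply]

lemma aux_mem (K : Type) [Field K] {n : ℕ} (G : Set (Finset (Fin n)))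
    (p : MvPolynomial (Fin n) K) :
    p ∈ Ideal.span (sqMon K '' G) ↔ ∀ u ∈ p.support, ∃ T ∈ G, T ⊆ u.support := by
  classical
  have h : sqMon K '' G = (fun s => monomial s (1:K)) ''
      ((fun T : Finset (Fin n) => (∑ i ∈ T, Finsupp.single i 1 : Fin n →₀ ℕ)) '' G) := by
    rw [Set.image_image]
    exact Set.image_congr fun T _ => aux_sqMon K T
  rw [h, MvPolynomial.mem_ideal_span_monomial_image]
  refine forall₂_congr fun u _ => ?_
  rw [Set.exists_mem_image]
  refine exists_congr fun T => and_congr_right fun _ => ?_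
  constructor
  · intro hle j hj
    have := hle j
    rw [aux_apply, if_pos hj] at this
    rw [Finsupp.mem_support_iff]; omega
  · intro hs j
    rw [aux_apply]
    split_ifs with hj
    · have := hs hj
      rw [Finsupp.mem_support_iff] at this; omega
    · omega

lemma aux_coeff_mul (K : Type) [Field K] {n : ℕ} (i : Fin n) (p q : MvPolynomial (Fin n) K)
    (hp : coeff 0 p = 0) (hq : coeff 0 q = 0) : coeff (Finsupp.single i 1) (p * q) = 0 := by
  classical
  rw [MvPolynomial.coeff_mul]
  refine Finset.sum_eq_zero fun x hx => ?_
  rw [Finset.HasAntidiagonal.mem_antidiagonal] at hx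
  have h := congrArg Finsupp.degree hx
  rw [map_add, Finsupp.degree_single] at h
  have h2 : x.1.degree = 0 ∨ x.2.degree = 0 := by omega
  rcases h2 with h2 | h2
  · rw [Finsupp.degree_eq_zero_iff] at h2; simp [h2, hp]
  · rw [Finsupp.degree_eq_zero_iff] at h2; simp [h2, hq]

lemma aux_nzd (K : Type) [Field K] {n : ℕ} (G : Set (Finset (Fin n)))
    (g : MvPolynomial (Fin n) K) (h0 : coeff 0 g = 0)
    (h : (∑ j : Fin n, X j) * g ∈ Ideal.span (sqMon K '' G)) :
    g ∈ Ideal.span (sqMon K '' G) := by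
  classical
  rw [aux_mem] at h ⊢
  by_contra! hc
  obtain ⟨u0, hu0, hu0G⟩ := hc
  have hne : u0 ≠ 0 := by
    rintro rfl
    exact (MvPolynomial.mem_support_iff.1 hu0) h0
  obtain ⟨i, hi⟩ := Finsupp.support_nonempty_iff.2 hne
  let A := g.support.filter fun u => i ∈ u.support ∧ ∀ T ∈ G, ¬ T ⊆ u.support
  have hA : A.Nonempty := ⟨u0, by simp only [A, Finset.mem_filter]; exact ⟨hu0, hi, hu0G⟩⟩
  obtain ⟨u, huA, hmax⟩ := A.exists_max_image (fun u => u i) hA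
  simp only [A, Finset.mem_filter] at huA hmax
  obtain ⟨hug, hiu, huG⟩ := huA
  have hsupp : (u + Finsupp.single i 1).support ⊆ u.support := by
    intro j hj
    by_cases hji : j = i
    · rwa [hji]
    · rw [Finsupp.mem_support_iff] at hj ⊢
      simpa [Finsupp.single_apply, Ne.symm hji] using hj
  have hco : coeff (u + Finsupp.single i 1) ((∑ j : Fin n, X j) * g) = coeff u g := by
    rw [Finset.sum_mul, MvPolynomial.coeff_sum, Finset.sum_eq_single i]
    · rw [add_comm, MvPolynomial.coeff_X_mul]
    · intro j _ hji
      rw [MvPolynomial.coeff_X_mul']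
      split_ifs with hj
      · by_contra hne0
        have hval : (u + Finsupp.single i 1 - Finsupp.single j 1 : Fin n →₀ ℕ) i = u i + 1 := by
          simp [Finsupp.single_apply, hji]
        have := hmax (u + Finsupp.single i 1 - Finsupp.single j 1)
          ⟨MvPolynomial.mem_support_iff.2 hne0, by
            rw [Finsupp.mem_support_iff, hval]; omega, fun T hT hTs => huG T hT
              (hTs.trans (Finset.Subset.trans (fun k hk => by
                rw [Finsupp.mem_support_iff] at hk ⊢
                intro hk0
                apply hk
                rw [Finsupp.tsub_apply, hk0, Nat.zero_sub]) hsupp))⟩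
        rw [hval] at this
        omega
      · rfl
    · simp
  obtain ⟨T, hT, hTs⟩ := h (u + Finsupp.single i 1) (by
    rw [MvPolynomial.mem_support_iff, hco]; exact MvPolynomial.mem_support_iff.1 hug)
  exact huG T hT (hTs.trans hsupp)

lemma aux_mk_mem {R : Type} [CommRing R] (I J : Ideal R) (a : R) (x : I) :
    ((Submodule.Quotient.mk x : idealQuot I J) ∈ (a • ⊤ : Submodule R (idealQuot I J))) ↔
      ∃ y ∈ I, (x : R) - a * y ∈ J := by
  rw [Submodule.mem_smul_pointwise_iff_exists]
  constructor
  · rintro ⟨y, -, hy⟩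
    obtain ⟨y, rfl⟩ := Submodule.Quotient.mk_surjective _ y
    refine ⟨y, y.2, ?_⟩
    rw [← Submodule.Quotient.mk_smul, eq_comm, Submodule.Quotient.eq] at hy
    simpa using hy
  · rintro ⟨y, hy, h⟩
    refine ⟨Submodule.Quotient.mk ⟨y, hy⟩, trivial, ?_⟩
    rw [← Submodule.Quotient.mk_smul, eq_comm, Submodule.Quotient.eq]
    simpa using h

lemma aux_reg {R : Type} [CommRing R] (I J : Ideal R) (a : R) :
    IsSMulRegular (idealQuot I J) a ↔ ∀ x ∈ I, a * x ∈ J → x ∈ J := by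
  rw [isSMulRegular_quotient_iff_mem_of_smul_mem]
  constructor
  · intro h x hx hax
    have := h ⟨x, hx⟩ (by simpa using hax)
    simpa using this
  · rintro h ⟨x, hx⟩ hax
    simpa using h x hx (by simpa using hax)

/-- Lemma 1.13. -/
theorem stmt_9 (n : ℕ) (K : Type) [Field K]
    (I J : Ideal (MvPolynomial (Fin n) K)) (hJ0 : J ≠ ⊥) (hJI : J < I)
    (r : ℕ) (hr : 0 < r) (hrn : r ≤ n) (f : Fin r → Finset (Fin n))
    (hf : ∀ i : Fin r, f i = {Fin.castLE hrn i})
    (hIgen : I = Ideal.span (Set.range fun i => sqMon K (f i)))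
    (hJgen : GenBySqMonOfDeg K (fun k => k = 2) J)
    (hb : ∀ T : Finset (Fin n), T.card = 2 → sqMon K T ∈ I → sqMon K T ∉ J →
      ∀ k ∈ T, (k : ℕ) < r) :
    moduleDepth (maxGraded K n) (idealQuot I J) = (1 : ℕ∞) := by

  classical
  have hsing : ∀ i : Fin n, sqMon K {i} = X i := fun i => by simp [sqMon]
  have hXI : ∀ i : Fin n, (i : ℕ) < r → (X i : MvPolynomial (Fin n) K) ∈ I := by
    intro i hi
    rw [hIgen]
    refine Ideal.subset_span ⟨⟨i, hi⟩, ?_⟩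
    simp only [hf]
    rw [hsing]; rfl
  have hm0 : ∀ p ∈ maxGraded K n, coeff 0 p = 0 := by
    have : maxGraded K n ≤ RingHom.ker (constantCoeff : MvPolynomial (Fin n) K →+* K) := by
      rw [maxGraded, Ideal.span_le]
      rintro _ ⟨i, rfl⟩
      simp
    intro p hp
    have := this hp
    rwa [RingHom.mem_ker, constantCoeff_eq] at this
  have hIm : I ≤ maxGraded K n := by
    rw [hIgen, Ideal.span_le]
    rintro _ ⟨i, rfl⟩
    simp only [hf]
    rw [hsing]
    exact Ideal.subset_span ⟨_, rfl⟩
  obtain ⟨G, hG, hJG⟩ := hJgen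
  have hJ1 : ∀ p ∈ J, ∀ i, coeff (Finsupp.single i 1) p = 0 := by
    intro p hp i
    by_contra hne
    rw [hJG, aux_mem] at hp
    obtain ⟨T, hT, hTs⟩ := hp _ (MvPolynomial.mem_support_iff.2 hne)
    have h1 := Finset.card_le_card (hTs.trans Finsupp.support_single_subset)
    rw [hG T hT] at h1
    simp at h1
  let A : Ideal (MvPolynomial (Fin n) K) := Ideal.span (X '' {k : Fin n | r ≤ (k : ℕ)})
  have hAI : ∀ a ∈ A, ∀ y ∈ I, a * y ∈ J := by
    have : A * I ≤ J := by
      rw [hIgen]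
      simp only [A]
      rw [Ideal.span_mul_span', Ideal.span_le]
      rintro _ ⟨_, ⟨k, hk, rfl⟩, _, ⟨i, rfl⟩, rfl⟩
      simp only [hf]
      rw [hsing]
      have hk' : r ≤ (k : ℕ) := hk
      have hne : k ≠ Fin.castLE hrn i := by
        rintro rfl
        have := i.2
        simp at hk'
        omega
      have e : sqMon K {k, Fin.castLE hrn i} = X k * X (Fin.castLE hrn i) := by
        rw [sqMon, Finset.prod_pair hne]
      change X k * X (Fin.castLE hrn i) ∈ J
      by_contra hc
      rw [← e] at hc
      have := hb _ (Finset.card_pair hne)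
        (by rw [e]; exact I.mul_mem_left _ (hXI _ i.2)) hc k (by simp)
      omega
    exact fun a ha y hy => this (Ideal.mul_mem_mul ha hy)
  have hmle : maxGraded K n ≤ I ⊔ A := by
    rw [maxGraded, Ideal.span_le]
    rintro _ ⟨i, rfl⟩
    by_cases hi : (i : ℕ) < r
    · exact Ideal.mem_sup_left (hXI i hi)
    · exact Ideal.mem_sup_right (Ideal.subset_span ⟨i, not_lt.1 hi, rfl⟩)
  let i0 : Fin n := ⟨0, by omega⟩
  have hi0 : (X i0 : MvPolynomial (Fin n) K) ∈ I := hXI i0 hr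
  unfold moduleDepth
  apply le_antisymm
  · apply sSup_le
    rintro _ ⟨rs, rfl, hrs, hreg⟩
    rcases rs with _ | ⟨a, _ | ⟨b, t⟩⟩
    · simp
    · simp
    · exfalso
      have hw := hreg.toIsWeaklyRegular
      rw [RingTheory.Sequence.isWeaklyRegular_cons_iff,
        RingTheory.Sequence.isWeaklyRegular_cons_iff] at hw
      obtain ⟨h1, h2, -⟩ := hw
      rw [aux_reg] at h1
      have ham : a ∈ maxGraded K n := hrs a (by simp)
      have hbm : b ∈ maxGraded K n := hrs b (by simp)
      obtain ⟨a0, ha0, a1, ha1, rfl⟩ := Submodule.mem_sup.1 (hmle ham)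
      obtain ⟨b0, hb0, b1, hb1, rfl⟩ := Submodule.mem_sup.1 (hmle hbm)
      have h3 := (isSMulRegular_quotient_iff_mem_of_smul_mem _ _).1 h2
        (Submodule.Quotient.mk ⟨a0, ha0⟩) (by
          rw [← Submodule.Quotient.mk_smul, aux_mk_mem]
          refine ⟨b0, hb0, ?_⟩
          have e : ((b0 + b1) • (⟨a0, ha0⟩ : I) : I).1 - (a0 + a1) * b0
              = b1 * a0 - a1 * b0 := by
            change (b0 + b1) * a0 - (a0 + a1) * b0 = _
            ring
          rw [e]
          exact J.sub_mem (hAI _ hb1 _ ha0) (hAI _ ha1 _ hb0))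
      rw [aux_mk_mem] at h3
      obtain ⟨y, hy, hyJ⟩ := h3
      have h4 := h1 (X i0 * (1 - y)) (I.mul_mem_right _ hi0) (by
        have e : (a0 + a1) * (X i0 * (1 - y)) = X i0 * (a0 - (a0 + a1) * y) + a1 * X i0 := by
          ring
        rw [e]
        exact J.add_mem (J.mul_mem_left _ hyJ) (hAI _ ha1 _ hi0))
      have h5 := hJ1 _ h4 i0
      rw [mul_sub, mul_one, coeff_sub, aux_coeff_mul K i0 _ _ (hm0 _ (hIm hi0)) (hm0 _ (hIm hy)),
        coeff_X] at h5
      simp at h5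
  · apply le_sSup
    have hsm : (∑ j : Fin n, X j : MvPolynomial (Fin n) K) ∈ maxGraded K n :=
      Ideal.sum_mem _ fun j _ => Ideal.subset_span ⟨j, rfl⟩
    refine ⟨[∑ j : Fin n, X j], by simp, by simpa using hsm, ?_⟩
    rw [RingTheory.Sequence.isRegular_iff]
    constructor
    · rw [RingTheory.Sequence.isWeaklyRegular_singleton_iff, aux_reg]
      intro x hx hax
      rw [hJG] at hax ⊢
      exact aux_nzd K G x (hm0 _ (hIm hx)) hax
    · intro htop
      rw [Ideal.ofList_singleton, Submodule.ideal_span_singleton_smul] at htop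
      have h3 : (Submodule.Quotient.mk ⟨X i0, hi0⟩ : idealQuot I J) ∈
          ((∑ j : Fin n, X j : MvPolynomial (Fin n) K) • ⊤ : Submodule (MvPolynomial (Fin n) K) (idealQuot I J)) := by
        rw [← htop]; trivial
      rw [aux_mk_mem] at h3
      obtain ⟨y, hy, hyJ⟩ := h3
      have h5 := hJ1 _ hyJ i0
      rw [coeff_sub, aux_coeff_mul K i0 _ _ (hm0 _ hsm) (hm0 _ (hIm hy)), coeff_X] at h5
      simp at h5
end

section
/- Suppose d = 1 and r > s, where s is the number of square-free monomials of degree 2 lying in I \ J. Then depth_S (I/J) = 1. -/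
open MvPolynomial

theorem sqMon_eq_monomial (K : Type) [Field K] {n : ℕ} (T : Finset (Fin n)) :
    sqMon K T = monomial (∑ i ∈ T, Finsupp.single i 1) 1 := by
  rw [sqMon, monomial_sum_one]
  rfl

theorem sum_single_le_iff {n : ℕ} (T : Finset (Fin n)) (m : Fin n →₀ ℕ) :
    (∑ i ∈ T, Finsupp.single i 1) ≤ m ↔ T ⊆ m.support := by
  have key : ∀ j, (∑ i ∈ T, Finsupp.single i 1 : Fin n →₀ ℕ) j = if j ∈ T then 1 else 0 := by
    intro j
    simp [Finsupp.finsetSum_apply, Finsupp.single_apply]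
  constructor
  · intro h j hj
    have := h j
    rw [key, if_pos hj] at this
    rw [Finsupp.mem_support_iff]
    omega
  · intro h j
    rw [key]
    split_ifs with hj
    · have := h hj
      rw [Finsupp.mem_support_iff] at this
      omega
    · omega

theorem mem_span_sqMon {K : Type} [Field K] {n : ℕ} (G : Set (Finset (Fin n)))
    (g : MvPolynomial (Fin n) K) :
    g ∈ Ideal.span (sqMon K '' G) ↔ ∀ m, coeff m g ≠ 0 → ∃ T ∈ G, T ⊆ m.support := by
  have : sqMon K '' G = (fun s => monomial s (1 : K)) ''
      ((fun T : Finset (Fin n) => ∑ i ∈ T, Finsupp.single i 1) '' G) := by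
    rw [Set.image_image]
    exact Set.image_congr fun T _ => sqMon_eq_monomial K T
  rw [this, mem_ideal_span_monomial_image]
  simp only [mem_support_iff, Set.exists_mem_image, sum_single_le_iff]

theorem sqMon_mem_iff {K : Type} [Field K] {n : ℕ} (G : Set (Finset (Fin n)))
    (U : Finset (Fin n)) :
    sqMon K U ∈ Ideal.span (sqMon K '' G) ↔ ∃ T ∈ G, T ⊆ U := by
  have hsup : (∑ i ∈ U, Finsupp.single i 1 : Fin n →₀ ℕ).support = U := by
    ext j
    simp [Finsupp.finsetSum_apply, Finsupp.single_apply]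
  rw [mem_span_sqMon, sqMon_eq_monomial]
  constructor
  · intro h
    have := h (∑ i ∈ U, Finsupp.single i 1) (by simp)
    rwa [hsup] at this
  · rintro ⟨T, hT, hTU⟩ m hm
    rw [coeff_monomial] at hm
    refine ⟨T, hT, ?_⟩
    have : (∑ i ∈ U, Finsupp.single i 1 : Fin n →₀ ℕ) = m := by
      by_contra h
      simp [h] at hm
    rw [← this, hsup]
    exact hTU

/-- Kill the variables outside `C`. -/
noncomputable def projVar (K : Type) [Field K] {n : ℕ} (C : Finset (Fin n)) :
    MvPolynomial (Fin n) K →ₐ[K] MvPolynomial (Fin n) K :=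
  aeval (fun i => if i ∈ C then X i else 0)

theorem projVar_monomial {K : Type} [Field K] {n : ℕ} (C : Finset (Fin n))
    (m : Fin n →₀ ℕ) (a : K) :
    projVar K C (monomial m a) = if m.support ⊆ C then monomial m a else 0 := by
  rw [projVar, aeval_monomial]
  split_ifs with h
  · rw [monomial_eq]
    congr 1
    refine Finset.prod_congr rfl fun i hi => ?_
    simp only
    rw [if_pos (h hi)]
  · obtain ⟨i, hi, hiC⟩ := Finset.not_subset.mp h
    have : (m.prod fun i k => (if i ∈ C then X i else 0 : MvPolynomial (Fin n) K) ^ k) = 0 := by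
      refine Finset.prod_eq_zero hi ?_
      simp only
      rw [if_neg hiC, zero_pow (Finsupp.mem_support_iff.mp hi)]
    rw [this, mul_zero]

theorem coeff_projVar {K : Type} [Field K] {n : ℕ} (C : Finset (Fin n))
    (g : MvPolynomial (Fin n) K) (m : Fin n →₀ ℕ) :
    coeff m (projVar K C g) = if m.support ⊆ C then coeff m g else 0 := by
  induction g using MvPolynomial.induction_on' with
  | monomial u a =>
    rw [projVar_monomial]
    by_cases hum : u = m
    · subst hum
      split_ifs <;> simp
    · split_ifs <;> simp [coeff_monomial, hum]
  | add p q hp hq =>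
    rw [map_add, coeff_add, hp, hq, coeff_add]
    split_ifs <;> simp

theorem projVar_eq_zero {K : Type} [Field K] {n : ℕ} {G : Set (Finset (Fin n))}
    {C : Finset (Fin n)} (hC : ∀ T ∈ G, ¬ T ⊆ C) {g : MvPolynomial (Fin n) K}
    (hg : g ∈ Ideal.span (sqMon K '' G)) : projVar K C g = 0 := by
  ext m
  rw [coeff_projVar, coeff_zero]
  split_ifs with h
  · by_contra hm
    obtain ⟨T, hT, hTm⟩ := (mem_span_sqMon G g).mp hg m hm
    exact hC T hT (hTm.trans h)
  · rfl

theorem projVar_projVar {K : Type} [Field K] {n : ℕ} {B C : Finset (Fin n)} (h : C ⊆ B)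
    (g : MvPolynomial (Fin n) K) : projVar K C (projVar K B g) = projVar K C g := by
  ext m
  simp only [coeff_projVar]
  split_ifs with h1 h2
  · rfl
  · exact absurd (h1.trans h) h2
  · rfl

theorem sub_projVar_mem {K : Type} [Field K] {n : ℕ} (B : Finset (Fin n))
    (g : MvPolynomial (Fin n) K) :
    g - projVar K B g ∈ Ideal.span (X '' {v | v ∉ B} : Set (MvPolynomial (Fin n) K)) := by
  rw [mem_ideal_span_X_image]
  intro m hm
  rw [mem_support_iff, coeff_sub, coeff_projVar] at hm
  split_ifs at hm with h
  · simp at hm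
  · obtain ⟨i, hi, hiB⟩ := Finset.not_subset.mp h
    exact ⟨i, hiB, Finsupp.mem_support_iff.mp hi⟩

theorem projVar_mem {K : Type} [Field K] {n : ℕ} (B : Finset (Fin n))
    (g : MvPolynomial (Fin n) K) (hg : coeff 0 g = 0) :
    projVar K B g ∈ Ideal.span (X '' (B : Set (Fin n)) : Set (MvPolynomial (Fin n) K)) := by
  rw [mem_ideal_span_X_image]
  intro m hm
  rw [mem_support_iff, coeff_projVar] at hm
  split_ifs at hm with h
  · have : m ≠ 0 := by
      rintro rfl
      exact hm hg
    obtain ⟨i, hi⟩ := Finsupp.support_nonempty_iff.mpr this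
    exact ⟨i, h hi, Finsupp.mem_support_iff.mp hi⟩
  · exact absurd rfl hm

theorem mul_mem_of_pairs {K : Type} [Field K] {n : ℕ} (B : Finset (Fin n))
    (J : Ideal (MvPolynomial (Fin n) K))
    (hB : ∀ b ∈ B, ∀ v ∉ B, (X v * X b : MvPolynomial (Fin n) K) ∈ J)
    {p q : MvPolynomial (Fin n) K}
    (hp : p ∈ Ideal.span (X '' {v | v ∉ B} : Set (MvPolynomial (Fin n) K)))
    (hq : q ∈ Ideal.span (X '' (B : Set (Fin n)) : Set (MvPolynomial (Fin n) K))) :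
    p * q ∈ J := by
  have h := Ideal.mul_mem_mul hp hq
  rw [Ideal.span_mul_span'] at h
  refine (Ideal.span_le.mpr ?_) h
  rintro _ ⟨_, ⟨v, hv, rfl⟩, _, ⟨b, hb, rfl⟩, rfl⟩
  exact hB b hb v hv

theorem exists_closed {n : ℕ} (A : Finset (Fin n)) (H : Set (Finset (Fin n)))
    (hH : H.ncard < A.card) :
    ∃ B ⊆ A, B.Nonempty ∧ ∀ b ∈ B, ∀ v ∉ B, ({b, v} : Finset (Fin n)) ∉ H := by
  classical
  let P : Finset (Fin n) → Prop := fun U =>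
    U ⊆ A ∧ U.card ≤ {T | T ∈ H ∧ ∀ x ∈ T, x ∈ U ∨ x ∉ A}.ncard
  obtain ⟨U, hU, hmax⟩ := (Set.toFinite {U | P U}).exists_maximal
    ⟨∅, by simp [P]⟩
  have hUA : U ≠ A := by
    rintro rfl
    have h1 := hU.2
    have h2 : {T | T ∈ H ∧ ∀ x ∈ T, x ∈ U ∨ x ∉ U}.ncard ≤ H.ncard :=
      Set.ncard_le_ncard (fun T hT => hT.1) (Set.toFinite _)
    omega
  refine ⟨A \ U, Finset.sdiff_subset, ?_, ?_⟩
  · rw [Finset.sdiff_nonempty]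
    exact fun h => hUA (hU.1.antisymm h)
  · intro b hb v hv hH'
    rw [Finset.mem_sdiff] at hb hv
    have hP : P (insert b U) := by
      refine ⟨Finset.insert_subset hb.1 hU.1, ?_⟩
      rw [Finset.card_insert_of_notMem hb.2]
      have h1 := hU.2
      have h2 : {T | T ∈ H ∧ ∀ x ∈ T, x ∈ U ∨ x ∉ A}.ncard <
          {T | T ∈ H ∧ ∀ x ∈ T, x ∈ insert b U ∨ x ∉ A}.ncard := by
        refine Set.ncard_lt_ncard ?_ (Set.toFinite _)
        rw [Set.ssubset_iff_of_subset]
        · refine ⟨{b, v}, ⟨hH', ?_⟩, ?_⟩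
          · intro x hx
            simp only [Finset.mem_insert, Finset.mem_singleton] at hx ⊢
            rcases hx with rfl | rfl
            · exact Or.inl (Or.inl rfl)
            · tauto
          · rintro ⟨_, h⟩
            have := h b (by simp)
            tauto
        · rintro T ⟨hT, h⟩
          refine ⟨hT, fun x hx => ?_⟩
          rw [Finset.mem_insert]
          have := h x hx
          tauto
      omega
    have := hmax hP (Finset.subset_insert b U)
    exact hb.2 (this (Finset.mem_insert_self b U))

theorem coeff_zero_of_mem_span_X {K : Type} [Field K] {n : ℕ} {s : Set (Fin n)}
    {g : MvPolynomial (Fin n) K}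
    (hg : g ∈ Ideal.span (X '' s : Set (MvPolynomial (Fin n) K))) : coeff 0 g = 0 := by
  by_contra h
  obtain ⟨i, _, hi⟩ := mem_ideal_span_X_image.mp hg 0 (mem_support_iff.mpr h)
  exact hi rfl

theorem coeff_zero_of_mem_maxGraded {K : Type} [Field K] {n : ℕ}
    {g : MvPolynomial (Fin n) K} (hg : g ∈ maxGraded K n) : coeff 0 g = 0 := by
  rw [maxGraded, ← Set.image_univ] at hg
  exact coeff_zero_of_mem_span_X hg

theorem idealQuot_mk_eq {R : Type} [CommRing R] {I J : Ideal R} (p q : I) :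
    (Submodule.Quotient.mk p : idealQuot I J) = Submodule.Quotient.mk q ↔ (p : R) - q ∈ J := by
  rw [Submodule.Quotient.eq]
  rfl

theorem depth_ge {K : Type} [Field K] {n : ℕ} (A : Finset (Fin n)) (hA : A.Nonempty)
    (G : Set (Finset (Fin n))) (hG : ∀ T ∈ G, T.card = 2)
    (I J : Ideal (MvPolynomial (Fin n) K))
    (hI : I = Ideal.span (X '' (A : Set (Fin n))))
    (hJ : J = Ideal.span (sqMon K '' G)) :
    RingTheory.Sequence.IsRegular (idealQuot I J)
      [∑ i, (X i : MvPolynomial (Fin n) K)] := by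
  classical
  have hc0 : ∀ g ∈ I, coeff 0 g = 0 := fun g hg =>
    coeff_zero_of_mem_span_X (by rwa [hI] at hg)
  refine ⟨?_, ?_⟩
  · rw [RingTheory.Sequence.isWeaklyRegular_singleton_iff,
      isSMulRegular_iff_right_eq_zero_of_smul]
    intro x hx
    obtain ⟨⟨g, hg⟩, rfl⟩ := Submodule.Quotient.mk_surjective _ x
    rw [← Submodule.Quotient.mk_smul, Submodule.Quotient.mk_eq_zero] at hx
    rw [Submodule.Quotient.mk_eq_zero]
    change (∑ i, (X i : MvPolynomial (Fin n) K)) * g ∈ J at hx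
    change g ∈ J
    rw [hJ, mem_span_sqMon]
    intro m hm
    by_contra! hcon
    rw [hJ] at hx
    have h := projVar_eq_zero (C := m.support) hcon hx
    rw [map_mul, mul_eq_zero] at h
    rcases h with h | h
    · have hm0 : m ≠ 0 := by
        rintro rfl
        exact hm (hc0 g hg)
      obtain ⟨i, hi⟩ := Finsupp.support_nonempty_iff.mpr hm0
      have := congrArg (coeff (Finsupp.single i 1)) h
      rw [coeff_projVar, if_pos] at this
      · simp [coeff_sum, coeff_X, Finsupp.single_left_inj] at this
      · exact Finsupp.support_single_subset.trans (by simpa using hi)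
    · have := congrArg (coeff m) h
      rw [coeff_projVar, if_pos subset_rfl] at this
      exact hm this
  · intro h
    obtain ⟨a, ha⟩ := hA
    have haI : (X a : MvPolynomial (Fin n) K) ∈ I := by
      rw [hI]
      exact Ideal.subset_span ⟨a, ha, rfl⟩
    have h1 : (Submodule.Quotient.mk ⟨X a, haI⟩ : idealQuot I J) ∈
      (⊤ : Submodule (MvPolynomial (Fin n) K) (idealQuot I J)) := trivial
    rw [h, Ideal.ofList_singleton, Submodule.ideal_span_singleton_smul,
      Submodule.mem_smul_pointwise_iff_exists] at h1
    obtain ⟨x, -, hx⟩ := h1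
    obtain ⟨⟨w, hw⟩, rfl⟩ := Submodule.Quotient.mk_surjective _ x
    rw [← Submodule.Quotient.mk_smul, idealQuot_mk_eq] at hx
    change (∑ i, (X i : MvPolynomial (Fin n) K)) * w - X a ∈ J at hx
    rw [hJ, mem_span_sqMon] at hx
    have h2 : coeff (Finsupp.single a 1)
        ((∑ i, (X i : MvPolynomial (Fin n) K)) * w - X a) = 0 := by
      by_contra hne
      obtain ⟨T, hT, hTs⟩ := hx _ hne
      have := Finset.card_le_card (hTs.trans Finsupp.support_single_subset)
      rw [hG T hT] at this
      simp at this
    have h3 : coeff 0 (pderiv a ((∑ i, (X i : MvPolynomial (Fin n) K)) * w)) = 0 := by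
      rw [Derivation.leibniz]
      have : constantCoeff w = 0 := by
        rw [constantCoeff_eq]; exact hc0 w hw
      rw [← constantCoeff_eq]
      simp [this]
    rw [coeff_pderiv] at h3
    simp only [zero_add, Finsupp.coe_zero, Pi.zero_apply, Nat.cast_zero, mul_one] at h3
    rw [coeff_sub, h3] at h2
    simp at h2

theorem depth_le {K : Type} [Field K] {n : ℕ} (A B : Finset (Fin n)) (hBA : B ⊆ A)
    (hBne : B.Nonempty)
    (G : Set (Finset (Fin n))) (hG : ∀ T ∈ G, T.card = 2)
    (I J : Ideal (MvPolynomial (Fin n) K))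
    (hI : I = Ideal.span (X '' (A : Set (Fin n))))
    (hJ : J = Ideal.span (sqMon K '' G))
    (hB : ∀ b ∈ B, ∀ v ∉ B, sqMon K {b, v} ∈ J)
    (y z : MvPolynomial (Fin n) K) (hy : y ∈ maxGraded K n) (hz : z ∈ maxGraded K n)
    (h1 : IsSMulRegular (idealQuot I J) y)
    (h2 : IsSMulRegular (QuotSMulTop y (idealQuot I J)) z) : False := by
  classical
  have hc0 : ∀ g ∈ I, coeff 0 g = 0 := fun g hg =>
    coeff_zero_of_mem_span_X (by rwa [hI] at hg)
  have hpairs : ∀ b ∈ B, ∀ v ∉ B, (X v * X b : MvPolynomial (Fin n) K) ∈ J := by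
    intro b hb v hv
    have hne : b ≠ v := by
      rintro rfl
      exact hv hb
    have := hB b hb v hv
    rwa [sqMon, Finset.prod_pair hne, mul_comm] at this
  have hBI : Ideal.span (X '' (B : Set (Fin n)) : Set (MvPolynomial (Fin n) K)) ≤ I := by
    rw [hI]
    exact Ideal.span_mono (Set.image_mono (by exact_mod_cast hBA))
  have hyB := projVar_mem B y (coeff_zero_of_mem_maxGraded hy)
  have hzB := projVar_mem B z (coeff_zero_of_mem_maxGraded hz)
  let u : I := ⟨projVar K B y, hBI hyB⟩
  let t : I := ⟨projVar K B z, hBI hzB⟩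
  have hut : z • (Submodule.Quotient.mk u : idealQuot I J) = y • Submodule.Quotient.mk t := by
    rw [← Submodule.Quotient.mk_smul, ← Submodule.Quotient.mk_smul, idealQuot_mk_eq]
    change z * projVar K B y - y * projVar K B z ∈ J
    have e1 := mul_mem_of_pairs B J hpairs (sub_projVar_mem B z) hyB
    have e2 := mul_mem_of_pairs B J hpairs (sub_projVar_mem B y) hzB
    have := J.sub_mem e1 e2
    ring_nf at this ⊢
    exact this
  have hu := mem_of_isSMulRegular_quotient_of_smul_mem h2
    (x := (Submodule.Quotient.mk u : idealQuot I J))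
    (by rw [hut]; exact Submodule.smul_mem_pointwise_smul _ _ _ trivial)
  rw [Submodule.mem_smul_pointwise_iff_exists] at hu
  obtain ⟨x, -, hx⟩ := hu
  obtain ⟨⟨w, hw⟩, rfl⟩ := Submodule.Quotient.mk_surjective _ x
  rw [← Submodule.Quotient.mk_smul, idealQuot_mk_eq] at hx
  change y * w - projVar K B y ∈ J at hx
  obtain ⟨b, hb⟩ := hBne
  obtain ⟨C, ⟨hbC, hCf⟩, hmax⟩ := (Set.toFinite
    {C : Finset (Fin n) | b ∈ C ∧ ∀ T ∈ G, ¬ T ⊆ C}).exists_maximal ⟨{b}, by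
      refine ⟨by simp, fun T hT hTb => ?_⟩
      have := Finset.card_le_card hTb
      rw [hG T hT] at this
      simp at this⟩
  have hCB : C ⊆ B := by
    intro c hc
    by_contra hcB
    have := hB b hb c hcB
    rw [hJ, sqMon_mem_iff] at this
    obtain ⟨T, hT, hTs⟩ := this
    refine hCf T hT (hTs.trans ?_)
    intro x hx
    simp only [Finset.mem_insert, Finset.mem_singleton] at hx
    rcases hx with rfl | rfl <;> assumption
  have hyC : projVar K C y = 0 := by
    rw [hJ] at hx
    have h := projVar_eq_zero hCf hx
    rw [map_sub, map_mul, projVar_projVar hCB] at h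
    have h' : projVar K C y * (projVar K C w - 1) = 0 := by
      rw [← h]; ring
    rcases mul_eq_zero.mp h' with h' | h'
    · exact h'
    · exfalso
      have := congrArg (coeff 0) h'
      rw [coeff_sub, coeff_projVar, hc0 w hw] at this
      simp at this
  have hyspan := sub_projVar_mem C y
  rw [hyC, sub_zero] at hyspan
  have hyg0 : ∀ q ∈ Ideal.span (X '' {v | v ∉ C} : Set (MvPolynomial (Fin n) K)),
      q * sqMon K C ∈ J := by
    intro q hq
    induction hq using Submodule.span_induction with
    | mem x hx =>
      obtain ⟨v, hv, rfl⟩ := hx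
      have : (X v * sqMon K C : MvPolynomial (Fin n) K) = sqMon K (insert v C) := by
        rw [sqMon, sqMon, Finset.prod_insert hv]
      rw [this, hJ, sqMon_mem_iff]
      by_contra! hcon
      have := hmax (y := insert v C) ⟨Finset.mem_insert_of_mem hbC, hcon⟩
        (Finset.subset_insert v C)
      exact hv (this (Finset.mem_insert_self v C))
    | zero => simp
    | add p q _ _ hp hq => rw [add_mul]; exact J.add_mem hp hq
    | smul a p _ hp => rw [smul_eq_mul, mul_assoc]; exact J.mul_mem_left a hp
  have hyg := hyg0 y hyspan
  have hgI : sqMon K C ∈ I := by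
    have : (X b : MvPolynomial (Fin n) K) ∈ I := by
      rw [hI]
      exact Ideal.subset_span ⟨b, hBA hb, rfl⟩
    exact I.mem_of_dvd (Finset.dvd_prod_of_mem _ hbC) this
  have hgJ : sqMon K C ∈ J := by
    have h0 := (isSMulRegular_iff_right_eq_zero_of_smul.mp h1)
      (Submodule.Quotient.mk ⟨sqMon K C, hgI⟩) (by
        rw [← Submodule.Quotient.mk_smul, Submodule.Quotient.mk_eq_zero]
        exact hyg)
    rw [Submodule.Quotient.mk_eq_zero] at h0
    exact h0
  rw [hJ, sqMon_mem_iff] at hgJ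
  obtain ⟨T, hT, hTC⟩ := hgJ
  exact hCf T hT hTC

/-- Proposition 1.14. -/
theorem stmt_10 (n : ℕ) (K : Type) [Field K]
    (I J : Ideal (MvPolynomial (Fin n) K)) (hJ0 : J ≠ ⊥) (hJI : J < I)
    (r : ℕ) (hr : 0 < r) (f : Fin r → Finset (Fin n)) (hfinj : Function.Injective f)
    (hfd : ∀ i, (f i).card = 1)
    (hIgen : I = Ideal.span (Set.range fun i => sqMon K (f i)))
    (hJgen : GenBySqMonOfDeg K (fun k => k = 2) J)
    (s : ℕ)
    (hs : s = Set.ncard {T : Finset (Fin n) |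
      T.card = 2 ∧ sqMon K T ∈ I ∧ sqMon K T ∉ J})
    (hrs : s < r) :
    moduleDepth (maxGraded K n) (idealQuot I J) = (1 : ℕ∞) := by
  classical
  obtain ⟨G, hG, hJ⟩ := hJgen
  choose a ha using fun i => Finset.card_eq_one.mp (hfd i)
  have hainj : Function.Injective a := by
    intro i j hij
    apply hfinj
    rw [ha, ha, hij]
  let A : Finset (Fin n) := Finset.univ.image a
  have hAcard : A.card = r := by
    rw [Finset.card_image_of_injective _ hainj, Finset.card_univ, Fintype.card_fin]
  have hI : I = Ideal.span (X '' (A : Set (Fin n))) := by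
    rw [hIgen]
    congr 1
    ext p
    simp [A, ha, sqMon]
  have hAne : A.Nonempty := by
    rw [← Finset.card_pos, hAcard]
    exact hr
  apply le_antisymm
  · apply sSup_le
    rintro k ⟨rs, rfl, hm, hreg⟩
    match rs, hm, hreg with
    | [], _, _ => simp
    | [y], _, _ => simp
    | y :: z :: l, hm, hreg =>
      exfalso
      have hw := hreg.toIsWeaklyRegular
      rw [RingTheory.Sequence.isWeaklyRegular_cons_iff,
        RingTheory.Sequence.isWeaklyRegular_cons_iff] at hw
      obtain ⟨B, hBA, hBne, hBH⟩ := exists_closed A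
        {T : Finset (Fin n) | T.card = 2 ∧ sqMon K T ∈ I ∧ sqMon K T ∉ J}
        (by rw [← hs, hAcard]; exact hrs)
      refine depth_le A B hBA hBne G hG I J hI hJ ?_ y z (hm y (by simp)) (hm z (by simp))
        hw.1 hw.2.1
      intro b hb v hv
      by_contra hcon
      have hne : b ≠ v := by
        rintro rfl
        exact hv hb
      refine hBH b hb v hv ⟨Finset.card_pair hne, ?_, hcon⟩
      have : (X b : MvPolynomial (Fin n) K) ∈ I := by
        rw [hI]
        exact Ideal.subset_span ⟨b, hBA hb, rfl⟩
      exact I.mem_of_dvd (Finset.dvd_prod_of_mem _ (by simp)) this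
  · apply le_sSup
    refine ⟨_, ?_, ?_, depth_ge A hAne G hG I J hI hJ⟩
    · simp
    · intro x hx
      rw [List.mem_singleton] at hx
      rw [hx]
      exact Ideal.sum_mem _ fun i _ => Ideal.subset_span ⟨i, rfl⟩
end
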